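/- If the last PU, PU (k−1), is non-saturated, then the algorithm distributes the entire load: L k = 0, equivalently ∑_{i=0}^{k−1} tw i = n. -/

import Mathlib

/-!
The speeds of the units from the last one on sum to the speed of the last one alone, so its
proportional share is all of the load still unassigned. When its capacity allows, it therefore
takes everything that is left, however the earlier units were loaded.
-/

theorem sum_range_eq_sub_of_succ_eq_sub {G : Type*} [AddCommGroup G] {L t : ℕ → G} {k : ℕ}
    (hL : ∀ i < k, L (i + 1) = L i - t i) :
    ∑ i ∈ Finset.range k, t i = L 0 - L k := by
  rw [← Finset.sum_range_sub']
  refine Finset.sum_congr rfl fun i hi ↦ ?_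
  rw [hL i (Finset.mem_range.mp hi), sub_sub_cancel]

theorem mul_div_sum_Ico_succ_self {K : Type*} [Semifield K] {c : ℕ → K} {p : ℕ}
    (hc : c p ≠ 0) (x : K) :
    c p * x / ∑ j ∈ Finset.Ico p (p + 1), c j = x := by
  rw [Nat.Ico_succ_singleton, Finset.sum_singleton, mul_div_cancel_left₀ x hc]

theorem stmt_7_general {K : Type*} [Field K] [LinearOrder K] {p : ℕ} {n : K}
    {c m S L desW tw : ℕ → K}
    (hc : c p ≠ 0)
    (hS : ∀ i ≤ p + 1, S i = ∑ j ∈ Finset.Ico i (p + 1), c j)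
    (hL0 : L 0 = n)
    (hdesW : ∀ i < p + 1, desW i = c i * L i / S i)
    (htw : ∀ i < p + 1, tw i = min (desW i) (m i))
    (hLrec : ∀ i < p + 1, L (i + 1) = L i - tw i)
    (hlast_nonsat : desW p ≤ m p) :
    L (p + 1) = 0 ∧ ∑ i ∈ Finset.range (p + 1), tw i = n := by
  have hp : p < p + 1 := p.lt_succ_self
  have last_desW : desW p = L p := by
    rw [hdesW p hp, hS p hp.le, mul_div_sum_Ico_succ_self hc]
  have last_tw : tw p = L p := by
    rw [htw p hp, min_eq_left hlast_nonsat, last_desW]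
  have residual_eq_zero : L (p + 1) = 0 := by
    rw [hLrec p hp, last_tw, sub_self]
  refine ⟨residual_eq_zero, ?_⟩
  rw [sum_range_eq_sub_of_succ_eq_sub hLrec, hL0, residual_eq_zero, sub_zero]

theorem stmt_7
    (k : ℕ) (hk : 1 ≤ k) (n : ℝ) (hn : 0 < n)
    (c m : ℕ → ℝ)
    (hc : ∀ i < k, 0 < c i) (hm : ∀ i < k, 0 < m i)
    (S L desW tw : ℕ → ℝ)
    (hS : ∀ i ≤ k, S i = ∑ j ∈ Finset.Ico i k, c j)
    (hL0 : L 0 = n)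
    (hdesW : ∀ i < k, desW i = c i * L i / S i)
    (htw : ∀ i < k, tw i = min (desW i) (m i))
    (hLrec : ∀ i < k, L (i + 1) = L i - tw i)
    (hsorted : ∀ i j, i ≤ j → j < k → c i / m i ≥ c j / m j)
    (hlast_nonsat : desW (k - 1) ≤ m (k - 1)) :
    L k = 0 ∧ ∑ i ∈ Finset.range k, tw i = n := by
  obtain ⟨p, rfl⟩ := Nat.exists_eq_add_of_le' hk
  exact stmt_7_general (hc p p.lt_succ_self).ne' hS hL0 hdesW htw hLrec hlast_nonsat
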